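/- (State prediction) Let f : ℝ^n × ℝ^{n_u} × ℝ^{n_p} × ℝ^{n_w} → ℝ^n be continuously differentiable, let u ∈ ℝ^{n_u}, let X ⊂ ℝ^n, P ⊂ ℝ^{n_p}, W ⊂ ℝ^{n_w} be constrained zonotopes, let B_x ⊆ ℝ^n and B_p ⊆ ℝ^{n_p} be convex sets with X ⊆ B_x and P ⊆ B_p, and choose γ_x ∈ B_x, γ_p ∈ B_p; set Z = X × P ⊂ ℝ^{n+n_p} and γ_z = (γ_x, γ_p). Let Z_w ⊆ ℝ^n be a set with {f(γ_x, u, γ_p, w) : w ∈ W} ⊆ Z_w, and let J be an interval matrix in 𝕀ℝ^{n×(n+n_p)} with bounds J^L ≤ J^U such that for all x ∈ B_x, p ∈ B_p, w ∈ W, the Jacobian of the map (x,p) ↦ f(x,u,p,w) at (x,p) lies componentwise between J^L and J^U. Let Ḡ ∈ ℝ^{(n+n_p)×n̄_g} and c̄ ∈ ℝ^{n+n_p} be such that Z − γ_z ⊆ {c̄ + Ḡ ξ : ‖ξ‖_∞ ≤ 1}, let m ∈ 𝕀ℝ^n be an interval vector with mid(m) = 0 and (Ĵ − mid(J)) c̄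 ∈ m for every Ĵ ∈ J, and let P̂ ∈ ℝ^{n×n} be the diagonal matrix with P̂_{ii} = rad(m_i) + Σ_{j=1}^{n̄_g} Σ_{k=1}^{n+n_p} rad(J_{ik}) |Ḡ_{kj}|. Then {f(x, u, p, w) : x ∈ X, p ∈ P, w ∈ W} ⊆ Z_w ⊕ mid(J)·(Z − γ_z) ⊕ P̂·B_∞^n. -/

import Mathlib

open Matrix Pointwise

/-- A constrained zonotope with generator matrix `G`, center `c`,
constraint matrix `A` and constraint vector `b`.  Here `N → ℝ` carries the
supremum norm (the default norm on Pi types). -/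
def CZ {N NG NC : Type*} [Fintype N] [Fintype NG] [Fintype NC]
    (G : Matrix N NG ℝ) (c : N → ℝ) (A : Matrix NC NG ℝ) (b : NC → ℝ) :
    Set (N → ℝ) :=
  {x | ∃ ξ : NG → ℝ, ‖ξ‖ ≤ 1 ∧ A.mulVec ξ = b ∧ x = c + G.mulVec ξ}

/-- A set is a constrained zonotope if it admits a CG-representation. -/
def IsCZ {N : Type*} [Fintype N] (S : Set (N → ℝ)) : Prop :=
  ∃ (ng nc : ℕ) (G : Matrix N (Fin ng) ℝ) (c : N → ℝ)
    (A : Matrix (Fin nc) (Fin ng) ℝ) (b : Fin nc → ℝ), S = CZ G c A b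

/-- A zonotope with generator matrix `G` and center `c`. -/
def Zono {N NG : Type*} [Fintype N] [Fintype NG]
    (G : Matrix N NG ℝ) (c : N → ℝ) : Set (N → ℝ) :=
  {x | ∃ ξ : NG → ℝ, ‖ξ‖ ≤ 1 ∧ x = c + G.mulVec ξ}

/-!
Apply the mean value theorem to each component of `g = f(·, u, ·, w)` on the segment from `γ` to
`z`. The intermediate points differ, so that `g z - g γ = A (z - γ)` for a matrix `A` which need not
be a Jacobian but whose rows are rows of Jacobians; since membership in the interval matrix `J` is
an entrywise condition, `A ∈ J` all the same. Now split `A = mid(J) + D` with `|D| ≤ rad(J)`.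
Writing `z - γ = c̄ + Ḡ ξ` gives `|D (z - γ)| ≤ |D c̄| + |D Ḡ ξ|`, where `|D c̄| ≤ rad(m)` and
`|D Ḡ ξ|` is at most the vector of row sums of `rad(J) |Ḡ|`. Hence `D (z - γ)` lies in the box
`P̂ B_∞`.
-/

section Interval

variable {ι κ : Type*} {L U A : Matrix ι κ ℝ}

/-- The interval matrix with bounds `L` and `U`, as the set of the real matrices it contains. -/
def intervalMatrix (L U : Matrix ι κ ℝ) : Set (Matrix ι κ ℝ) :=
  {A | ∀ i k, L i k ≤ A i k ∧ A i k ≤ U i k}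

/-- The midpoint `mid(J)` of the interval matrix `J` with bounds `L` and `U`. -/
noncomputable def intervalMid (L U : Matrix ι κ ℝ) : Matrix ι κ ℝ :=
  (1 / 2 : ℝ) • (L + U)

/-- The radius `rad(J)` of the interval matrix `J` with bounds `L` and `U`. -/
noncomputable def intervalRad (L U : Matrix ι κ ℝ) : Matrix ι κ ℝ :=
  of fun i k => (U i k - L i k) / 2

lemma abs_sub_midpoint_le_radius {l u a : ℝ} (ha : a ∈ Set.Icc l u) :
    |a - (l + u) / 2| ≤ (u - l) / 2 := by
  rwa [Real.Icc_eq_closedBall] at ha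

lemma abs_le_radius_of_midpoint_eq_zero {l u a : ℝ} (ha : a ∈ Set.Icc l u)
    (hmid : (l + u) / 2 = 0) : |a| ≤ (u - l) / 2 := by
  simpa only [hmid, sub_zero] using abs_sub_midpoint_le_radius ha

lemma abs_sub_intervalMid_le_intervalRad (hA : A ∈ intervalMatrix L U) (i : ι) (k : κ) :
    |(A - intervalMid L U) i k| ≤ intervalRad L U i k := by
  have hmid : intervalMid L U i k = (L i k + U i k) / 2 := by
    simp only [intervalMid, Matrix.smul_apply, Matrix.add_apply, smul_eq_mul]
    ring
  rw [Matrix.sub_apply, hmid]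
  exact abs_sub_midpoint_le_radius (hA i k)

end Interval

lemma image_diagonal_mulVec_closedBall {ι 𝕜 : Type*} [Fintype ι] [DecidableEq ι] [NormedField 𝕜]
    (q : ι → 𝕜) :
    (diagonal q).mulVec '' Metric.closedBall 0 1 = {v | ∀ i, ‖v i‖ ≤ ‖q i‖} := by
  ext v
  simp only [Set.mem_image, mem_closedBall_zero_iff, pi_norm_le_iff_of_nonneg zero_le_one,
    Set.mem_ofPred_eq]
  constructor
  · rintro ⟨b, hb, rfl⟩ i
    rw [mulVec_diagonal, norm_mul]
    exact mul_le_of_le_one_right (norm_nonneg _) (hb i)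
  · intro hv
    refine ⟨fun i => v i / q i, fun i => ?_, ?_⟩
    · rw [norm_div]
      exact div_le_one_of_le₀ (hv i) (norm_nonneg _)
    · ext i
      rw [mulVec_diagonal]
      -- A vanishing `q i` forces `v i = 0`, so that the junk value `v i / 0 = 0` is harmless.
      exact mul_div_cancel_of_imp' fun hq => norm_le_zero_iff.1 (by simpa [hq] using hv i)

section Remainder

variable {ι κ ν : Type*} [Fintype κ] [Fintype ν]

/-- The diagonal entries of `P̂`: componentwise bounds for `D * z` where `z` ranges over the
zonotope with generators `G` and center `c`, the entries of `D` are bounded by those of `R`, and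
`D * c` is bounded by `r`. In `P̂`, `R = rad(J)` and `r = rad(m)`. -/
def remainderRadius (R : Matrix ι κ ℝ) (G : Matrix κ ν ℝ) (r : ι → ℝ) : ι → ℝ :=
  fun i => r i + ∑ j, ∑ k, R i k * |G k j|

lemma abs_dotProduct_le_sum_mul_abs {v R : κ → ℝ} (hv : ∀ k, |v k| ≤ R k) (w : κ → ℝ) :
    |v ⬝ᵥ w| ≤ ∑ k, R k * |w k| :=
  (Finset.abs_sum_le_sum_abs _ _).trans <| Finset.sum_le_sum fun k _ => by
    rw [abs_mul]
    gcongr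
    exact hv k

lemma abs_dotProduct_mulVec_le {v R : κ → ℝ} (hv : ∀ k, |v k| ≤ R k) (G : Matrix κ ν ℝ)
    {ξ : ν → ℝ} (hξ : ‖ξ‖ ≤ 1) : |v ⬝ᵥ G *ᵥ ξ| ≤ ∑ j, ∑ k, R k * |G k j| := by
  have hcol (j : ν) : |(v ᵥ* G) j| ≤ ∑ k, R k * |G k j| :=
    abs_dotProduct_le_sum_mul_abs hv fun k => G k j
  calc |v ⬝ᵥ G *ᵥ ξ| = |(v ᵥ* G) ⬝ᵥ ξ| := by rw [dotProduct_mulVec]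
    _ ≤ ∑ j, (∑ k, R k * |G k j|) * |ξ j| := abs_dotProduct_le_sum_mul_abs hcol ξ
    _ ≤ ∑ j, ∑ k, R k * |G k j| := Finset.sum_le_sum fun j _ =>
      mul_le_of_le_one_right ((abs_nonneg _).trans (hcol j)) ((norm_le_pi_norm ξ j).trans hξ)

lemma abs_mulVec_le_remainderRadius {D R : Matrix ι κ ℝ} {G : Matrix κ ν ℝ} {c z : κ → ℝ}
    {r : ι → ℝ} (hz : z ∈ Zono G c) {i : ι} (hR : ∀ k, |D i k| ≤ R i k)
    (hr : |(D *ᵥ c) i| ≤ r i) : |(D *ᵥ z) i| ≤ remainderRadius R G r i := by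
  obtain ⟨ξ, hξ, rfl⟩ := hz
  rw [mulVec_add]
  exact (abs_add_le _ _).trans (add_le_add hr (abs_dotProduct_mulVec_le hR G hξ))

lemma sub_intervalMid_mulVec_mem_image_closedBall [Fintype ι] [DecidableEq ι]
    {L U A : Matrix ι κ ℝ} {G : Matrix κ ν ℝ} {c z : κ → ℝ} {r : ι → ℝ}
    (hA : A ∈ intervalMatrix L U) (hz : z ∈ Zono G c)
    (hr : ∀ i, |((A - intervalMid L U) *ᵥ c) i| ≤ r i) :
    (A - intervalMid L U) *ᵥ z ∈
      (diagonal (remainderRadius (intervalRad L U) G r)).mulVec '' Metric.closedBall 0 1 := by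
  rw [image_diagonal_mulVec_closedBall]
  exact fun i => (abs_mulVec_le_remainderRadius hz
    (abs_sub_intervalMid_le_intervalRad hA i) (hr i)).trans (le_abs_self _)

end Remainder

section MeanValue

variable {ι : Type*}

lemma exists_mem_apply_sub_eq_fderiv_apply {E : Type*} [NormedAddCommGroup E]
    [NormedSpace ℝ E] {g : E → ι → ℝ} {g' : E → E →L[ℝ] ι → ℝ} {B : Set E}
    (hg : ∀ z ∈ B, HasFDerivWithinAt g (g' z) B z) (hB : Convex ℝ B) {a b : E} (ha : a ∈ B)
    (hb : b ∈ B) (i : ι) : ∃ z ∈ B, g b i - g a i = g' z (b - a) i := by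
  obtain ⟨z, hz, h⟩ := domain_mvt (fun z hz => hasFDerivWithinAt_pi'.1 (hg z hz) i) hB ha hb
  exact ⟨z, hB.segment_subset ha hb hz, h⟩

lemma exists_mem_intervalMatrix_sub_eq_mulVec {κ : Type*} [Fintype κ] [DecidableEq κ]
    {g : (κ → ℝ) → ι → ℝ} {g' : (κ → ℝ) → (κ → ℝ) →L[ℝ] ι → ℝ} {B : Set (κ → ℝ)}
    {L U : Matrix ι κ ℝ} (hg : ∀ z ∈ B, HasFDerivWithinAt g (g' z) B z) (hB : Convex ℝ B)
    (hJ : ∀ z ∈ B, LinearMap.toMatrix' (g' z).toLinearMap ∈ intervalMatrix L U)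
    {a b : κ → ℝ} (ha : a ∈ B) (hb : b ∈ B) :
    ∃ A ∈ intervalMatrix L U, g b - g a = A *ᵥ (b - a) := by
  choose ζ hζ hsub using exists_mem_apply_sub_eq_fderiv_apply hg hB ha hb
  refine ⟨of fun i => LinearMap.toMatrix' (g' (ζ i)).toLinearMap i, fun i => hJ _ (hζ i) i, ?_⟩
  ext i
  exact (hsub i).trans (congrFun (LinearMap.toMatrix'_mulVec (g' (ζ i)).toLinearMap _) i).symm

end MeanValue

theorem state_prediction_general {Ω ι κ ν : Type*} [Fintype ι] [DecidableEq ι] [Fintype κ]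
    [DecidableEq κ] [Fintype ν] {g : Ω → (κ → ℝ) → ι → ℝ}
    {g' : Ω → (κ → ℝ) → (κ → ℝ) →L[ℝ] ι → ℝ} {W : Set Ω} {Z B : Set (κ → ℝ)} {γ : κ → ℝ}
    {Zw : Set (ι → ℝ)} {JL JU : Matrix ι κ ℝ} {G : Matrix κ ν ℝ} {c : κ → ℝ} {r : ι → ℝ}
    (hg : ∀ w ∈ W, ∀ z ∈ B, HasFDerivWithinAt (g w) (g' w z) B z)
    (hB : Convex ℝ B) (hZB : Z ⊆ B) (hγ : γ ∈ B) (hZw : (fun w => g w γ) '' W ⊆ Zw)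
    (hJ : ∀ w ∈ W, ∀ z ∈ B, LinearMap.toMatrix' (g' w z).toLinearMap ∈ intervalMatrix JL JU)
    (hG : (fun z => z - γ) '' Z ⊆ Zono G c)
    (hr : ∀ A ∈ intervalMatrix JL JU, ∀ i, |((A - intervalMid JL JU) *ᵥ c) i| ≤ r i) :
    Set.image2 g W Z ⊆
      Zw + (intervalMid JL JU).mulVec '' ((fun z => z - γ) '' Z) +
        (diagonal (remainderRadius (intervalRad JL JU) G r)).mulVec '' Metric.closedBall 0 1 := by
  rintro _ ⟨w, hw, z, hz, rfl⟩
  obtain ⟨A, hA, hsub⟩ :=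
    exists_mem_intervalMatrix_sub_eq_mulVec (hg w hw) hB (hJ w hw) hγ (hZB hz)
  have hzγ : z - γ ∈ (fun z => z - γ) '' Z := Set.mem_image_of_mem _ hz
  have hsplit : g w z = g w γ + intervalMid JL JU *ᵥ (z - γ) +
      (A - intervalMid JL JU) *ᵥ (z - γ) := by
    rw [sub_mulVec, ← hsub]
    abel
  rw [hsplit]
  exact Set.add_mem_add
    (Set.add_mem_add (hZw (Set.mem_image_of_mem _ hw)) (Set.mem_image_of_mem _ hzγ))
    (sub_intervalMid_mulVec_mem_image_closedBall hA (hG hzγ) (hr A hA))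

section SumProd

variable {α β : Type*}

/-- The Cartesian product `S × T` as a set of vectors indexed by `α ⊕ β`, which is how `X × P` is
placed in `ℝ^{n+n_p}`. -/
def sumProd (S : Set (α → ℝ)) (T : Set (β → ℝ)) : Set (α ⊕ β → ℝ) :=
  {z | (fun i => z (Sum.inl i)) ∈ S ∧ (fun j => z (Sum.inr j)) ∈ T}

lemma forall_mem_sumProd {S : Set (α → ℝ)} {T : Set (β → ℝ)} {p : (α ⊕ β → ℝ) → Prop} :
    (∀ z ∈ sumProd S T, p z) ↔ ∀ x ∈ S, ∀ y ∈ T, p (Sum.elim x y) :=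
  ⟨fun h x hx y hy => h _ ⟨hx, hy⟩, fun h z hz => by
    simpa only [Sum.elim_comp_inl_inr] using h (z ∘ Sum.inl) hz.1 (z ∘ Sum.inr) hz.2⟩

lemma convex_sumProd {S : Set (α → ℝ)} {T : Set (β → ℝ)} (hS : Convex ℝ S) (hT : Convex ℝ T) :
    Convex ℝ (sumProd S T) :=
  (hS.linear_preimage (LinearMap.funLeft ℝ ℝ Sum.inl)).inter
    (hT.linear_preimage (LinearMap.funLeft ℝ ℝ Sum.inr))

lemma differentiable_comp_sum_inl_inr [Finite α] [Finite β] {E F G : Type*}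
    [NormedAddCommGroup E] [NormedSpace ℝ E] [NormedAddCommGroup F] [NormedSpace ℝ F]
    [NormedAddCommGroup G] [NormedSpace ℝ G] {f : (α → ℝ) → E → (β → ℝ) → F → G}
    (hf : Differentiable ℝ fun q : (α → ℝ) × E × (β → ℝ) × F => f q.1 q.2.1 q.2.2.1 q.2.2.2)
    (u : E) (w : F) :
    Differentiable ℝ fun z : α ⊕ β → ℝ =>
      f (fun i => z (Sum.inl i)) u (fun j => z (Sum.inr j)) w := by
  have := Fintype.ofFinite α
  have := Fintype.ofFinite β
  exact hf.comp (f := fun z : α ⊕ β → ℝ => (fun i => z (Sum.inl i), u, fun j => z (Sum.inr j), w))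
    (by fun_prop)

end SumProd

/-- state prediction: with `Z = X × P ⊆ ℝ^{n+n_p}` (vectors indexed by
`Fin n ⊕ Fin n_p`), `γ_z = (γ_x, γ_p)`, an interval matrix `JL ≤ JU` enclosing the
Jacobians of `(x, p) ↦ f(x, u, p, w)` over `B_x × B_p × W`, a set `Z_w` enclosing
`f(γ_x, u, γ_p, W)`, a zonotope `{Ḡ, c̄} ⊇ Z - γ_z`, an interval vector `m` with
midpoint zero enclosing `(Ĵ - mid J) c̄` for all `Ĵ ∈ J`, and the diagonal matrix
`P̂` with `P̂_ii = rad(m_i) + Σ_j Σ_ℓ rad(J_iℓ) |Ḡ_ℓj|`, the exact image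
`f(X, u, P, W)` is contained in `Z_w ⊕ mid(J)·(Z - γ_z) ⊕ P̂·B_∞^n`. -/
theorem state_prediction {n nu np nw nbg : ℕ}
    (f : (Fin n → ℝ) → (Fin nu → ℝ) → (Fin np → ℝ) → (Fin nw → ℝ) → (Fin n → ℝ))
    (hf : ContDiff ℝ 1
      (fun q : (Fin n → ℝ) × (Fin nu → ℝ) × (Fin np → ℝ) × (Fin nw → ℝ) =>
        f q.1 q.2.1 q.2.2.1 q.2.2.2))
    (u : Fin nu → ℝ)
    (X : Set (Fin n → ℝ)) (hX : IsCZ X)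
    (P : Set (Fin np → ℝ)) (hP : IsCZ P)
    (W : Set (Fin nw → ℝ)) (hW : IsCZ W)
    (Bx : Set (Fin n → ℝ)) (hBx : Convex ℝ Bx) (hXBx : X ⊆ Bx)
    (Bp : Set (Fin np → ℝ)) (hBp : Convex ℝ Bp) (hPBp : P ⊆ Bp)
    (γx : Fin n → ℝ) (hγx : γx ∈ Bx) (γp : Fin np → ℝ) (hγp : γp ∈ Bp)
    (Zw : Set (Fin n → ℝ)) (hZw : (fun w => f γx u γp w) '' W ⊆ Zw)
    (JL JU : Matrix (Fin n) (Fin n ⊕ Fin np) ℝ) (hJle : ∀ i ℓ, JL i ℓ ≤ JU i ℓ)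
    (hJ : ∀ x ∈ Bx, ∀ p ∈ Bp, ∀ w ∈ W, ∀ i ℓ,
      JL i ℓ ≤ fderiv ℝ
          (fun z : (Fin n ⊕ Fin np) → ℝ =>
            f (fun i' => z (Sum.inl i')) u (fun j' => z (Sum.inr j')) w)
          (Sum.elim x p) (Pi.single ℓ 1) i ∧
      fderiv ℝ
          (fun z : (Fin n ⊕ Fin np) → ℝ =>
            f (fun i' => z (Sum.inl i')) u (fun j' => z (Sum.inr j')) w)
          (Sum.elim x p) (Pi.single ℓ 1) i ≤ JU i ℓ)
    (Gbar : Matrix (Fin n ⊕ Fin np) (Fin nbg) ℝ) (cbar : (Fin n ⊕ Fin np) → ℝ)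
    (hGbar : (fun z => z - Sum.elim γx γp) ''
        {z : (Fin n ⊕ Fin np) → ℝ |
          (fun i => z (Sum.inl i)) ∈ X ∧ (fun j => z (Sum.inr j)) ∈ P} ⊆
      Zono Gbar cbar)
    (mL mU : Fin n → ℝ) (hmle : ∀ i, mL i ≤ mU i)
    (hmid : ∀ i, (mL i + mU i) / 2 = 0)
    (hm : ∀ Jhat : Matrix (Fin n) (Fin n ⊕ Fin np) ℝ,
      (∀ i ℓ, JL i ℓ ≤ Jhat i ℓ ∧ Jhat i ℓ ≤ JU i ℓ) →
      ∀ i, mL i ≤ (Jhat - (1 / 2 : ℝ) • (JL + JU)).mulVec cbar i ∧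
        (Jhat - (1 / 2 : ℝ) • (JL + JU)).mulVec cbar i ≤ mU i) :
    {v : Fin n → ℝ | ∃ x ∈ X, ∃ p ∈ P, ∃ w ∈ W, v = f x u p w} ⊆
      Zw +
        ((1 / 2 : ℝ) • (JL + JU)).mulVec ''
          ((fun z => z - Sum.elim γx γp) ''
            {z : (Fin n ⊕ Fin np) → ℝ |
              (fun i => z (Sum.inl i)) ∈ X ∧ (fun j => z (Sum.inr j)) ∈ P}) +
        (Matrix.diagonal fun i =>
            (mU i - mL i) / 2 +
              ∑ j, ∑ ℓ, ((JU i ℓ - JL i ℓ) / 2) * |Gbar ℓ j|).mulVec ''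
          Metric.closedBall (0 : Fin n → ℝ) 1 := by
  rintro _ ⟨x, hx, p, hp, w, hw, rfl⟩
  exact state_prediction_general
    (fun w _ z _ => (differentiable_comp_sum_inl_inr
      (hf.differentiable one_ne_zero) u w z).hasFDerivAt.hasFDerivWithinAt)
    (convex_sumProd hBx hBp) (fun z hz => ⟨hXBx hz.1, hPBp hz.2⟩) ⟨hγx, hγp⟩ hZw
    (fun w hw => forall_mem_sumProd.2 fun x hx p hp => hJ x hx p hp w hw) hGbar
    (fun A hA i => abs_le_radius_of_midpoint_eq_zero (hm A hA i) (hmid i))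
    ⟨w, hw, Sum.elim x p, ⟨hx, hp⟩, rfl⟩
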